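/- Define two Boolean functions f, g : (Fin 4 → Bool) → Bool to be NPN-equivalent if there exist a permutation σ of Fin 4, a vector a : Fin 4 → Bool, and a bit b : Bool such that for all x, g x = xor (f (fun i => xor (x (σ i)) (a i))) b. NPN-equivalence is an equivalence relation on the 65536 Boolean functions of 4 variables, and the number of NPN-equivalence classes is exactly 222. -/

import Mathlib

/-- NPN equivalence of Boolean functions on 4 variables: `g` is obtained from `f` by
permuting inputs, negating a subset of inputs, and possibly negating the output. -/
def NPNEquiv4 (f g : (Fin 4 → Bool) → Bool) : Prop :=
  ∃ σ : Equiv.Perm (Fin 4), ∃ a : Fin 4 → Bool, ∃ b : Bool,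
    ∀ x : Fin 4 → Bool, g x = xor (f (fun i => xor (x (σ i)) (a i))) b

/-!
NPN classes are the orbits of `G × Perm Bool` on Boolean functions on the cube, where `G` is the
group of signed permutations of the coordinates. By Burnside's lemma it suffices to count the
functions fixed by each group element. Let `g ∈ G` have `c` cycles on the cube. A function is
invariant under `g` when it is constant on cycles, so there are `2 ^ c` of those. A function that
`g` negates has to alternate along each cycle, so there are `2 ^ c` of those too when every cycle
has even length, and none otherwise. Cycles are counted through their least elements, with the
points of the cube read as binary numerals. A signed permutation of four coordinates satisfies
`g ^ 24 = 1`, so its cycles all have even length exactly when `g ^ 3` has no fixed point.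
-/

open Equiv Finset MulAction

section FixedFunctions

variable {G X β : Type*} [Group G] [MulAction G X]

theorem orbitRel_zpowers_le_ker_iff {g : G} {f : X → β} :
    orbitRel (Subgroup.zpowers g) X ≤ Setoid.ker f ↔ ∀ x, f (g • x) = f x := by
  refine ⟨fun h x => h ⟨⟨g, Subgroup.mem_zpowers g⟩, rfl⟩, fun h => ?_⟩
  have hg : DomMulAct.mk g ∈ stabilizer Gᵈᵐᵃ f := funext h
  rintro _ x ⟨⟨_, k, rfl⟩, rfl⟩
  exact congrFun (mem_stabilizer_iff.1 (zpow_mem hg k)) x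

theorem card_invariant_functions [Finite X] (g : G) :
    Nat.card {f : X → β // ∀ x, f (g • x) = f x} =
      Nat.card β ^ Nat.card (orbitRel.Quotient (Subgroup.zpowers g) X) := by
  rw [← Nat.card_fun]
  exact Nat.card_congr <| (Equiv.subtypeEquivRight fun _ => orbitRel_zpowers_le_ker_iff.symm).trans
    (Setoid.liftEquiv _)

theorem apply_pow_smul_of_apply_smul_eq_not {M : Type*} [Monoid M] [MulAction M X] {g : M}
    {f : X → Bool} (hf : ∀ x, f (g • x) = !f x) (n : ℕ) (x : X) :
    f (g ^ n • x) = xor (decide (Odd n)) (f x) := by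
  induction n with
  | zero => simp
  | succ n ih => rw [pow_succ', mul_smul, hf, ih]; simp [Nat.odd_add_one, -Nat.not_odd_iff_even]

theorem exists_apply_smul_eq_not_iff {g : G} :
    (∃ f : X → Bool, ∀ x, f (g • x) = !f x) ↔ ∀ x : X, Even (period g x) := by
  refine ⟨fun ⟨f, hf⟩ x => ?_, fun h => ?_⟩
  · by_contra hx
    have := apply_pow_smul_of_apply_smul_eq_not hf (period g x) x
    simp [pow_period_smul, Nat.not_even_iff_odd.1 hx] at this
  · -- Colour each point by the parity of its distance from a representative of its orbit.
    let rep (x : X) : X := (Quotient.mk (orbitRel (Subgroup.zpowers g) X) x).out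
    have exists_zpow (x : X) : ∃ k : ℤ, g ^ k • rep x = x := by
      obtain ⟨⟨_, k, rfl⟩, hk⟩ :=
        (orbitRel (Subgroup.zpowers g) X).symm (Quotient.mk_out x)
      exact ⟨k, hk⟩
    choose k hk using exists_zpow
    have rep_smul (x : X) : rep (g • x) = rep x :=
      congrArg Quotient.out (Quotient.sound ⟨⟨g, Subgroup.mem_zpowers g⟩, rfl⟩)
    refine ⟨fun x => decide (Even (k x)), fun x => ?_⟩
    have hfix : g ^ (k (g • x) - (1 + k x)) • rep x = rep x := by
      have : g ^ k (g • x) • rep x = g ^ (1 + k x) • rep x := by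
        rw [zpow_one_add, mul_smul, hk, ← rep_smul, hk]
      rw [sub_eq_neg_add, zpow_add, mul_smul, this, zpow_neg, inv_smul_smul]
    have heven : Even (k (g • x) - (1 + k x)) :=
      ((Int.even_coe_nat _).2 (h _)).trans_dvd (zpow_smul_eq_iff_period_dvd.1 hfix)
    rw [Int.even_sub, Int.even_add] at heven
    simp [heven, -Int.not_even_iff_odd]

theorem card_negated_functions [Finite X] (g : G) [Decidable (∀ x : X, Even (period g x))] :
    Nat.card {f : X → Bool // ∀ x, f (g • x) = !f x} =
      if ∀ x : X, Even (period g x)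
        then 2 ^ Nat.card (orbitRel.Quotient (Subgroup.zpowers g) X) else 0 := by
  split_ifs with h
  · obtain ⟨f₀, hf₀⟩ := exists_apply_smul_eq_not_iff.2 h
    have xor_f₀_involutive : Function.Involutive fun (f : X → Bool) x => xor (f₀ x) (f x) :=
      fun f => by simp
    rw [← Fintype.card_bool, ← Nat.card_eq_fintype_card, ← card_invariant_functions]
    refine Nat.card_congr (xor_f₀_involutive.toPerm.subtypeEquiv fun f => forall_congr' fun x => ?_)
    change _ ↔ xor (f₀ (g • x)) (f (g • x)) = xor (f₀ x) (f x)
    rw [hf₀, Bool.not_xor, ← Bool.xor_not, Bool.xor_right_inj]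
    exact Bool.not_eq_eq_eq_not.symm
  · have : IsEmpty {f : X → Bool // ∀ x, f (g • x) = !f x} :=
      ⟨fun f => h (exists_apply_smul_eq_not_iff.1 ⟨f, f.2⟩)⟩
    exact Nat.card_of_isEmpty

end FixedFunctions

section Burnside

variable {G X : Type*} [Group G] [MulAction G X]

/-- `(g, p)` sends a Boolean function `f` to `x ↦ p (f (g • x))`. -/
instance inputOutputMulAction : MulAction (Gᵈᵐᵃ × Perm Bool) (X → Bool) :=
  MulAction.prodOfSMulCommClass _ _ _

theorem univ_perm_bool : (univ : Finset (Perm Bool)) = {1, boolNot} := by decide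

theorem sum_card_fixedBy_perm_bool [Finite X] (g : G) [Decidable (∀ x : X, Even (period g x))] :
    ∑ p : Perm Bool, Nat.card (fixedBy (X → Bool) (DomMulAct.mk g, p)) =
      2 ^ Nat.card (orbitRel.Quotient (Subgroup.zpowers g) X) *
        if ∀ x : X, Even (period g x) then 2 else 1 := by
  have card_fixed_id : Nat.card (fixedBy (X → Bool) (DomMulAct.mk g, (1 : Perm Bool))) =
      2 ^ Nat.card (orbitRel.Quotient (Subgroup.zpowers g) X) := by
    rw [← Fintype.card_bool, ← Nat.card_eq_fintype_card, ← card_invariant_functions]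
    exact Nat.card_congr (Equiv.subtypeEquivRight fun f => funext_iff)
  have card_fixed_not : Nat.card (fixedBy (X → Bool) (DomMulAct.mk g, boolNot)) = _ :=
    (Nat.card_congr (Equiv.subtypeEquivRight fun f =>
      funext_iff.trans (forall_congr' fun x => Bool.not_eq_eq_eq_not))).trans
      (card_negated_functions g)
  rw [univ_perm_bool, sum_pair (by decide), card_fixed_id, card_fixed_not]
  split_ifs <;> ring

theorem card_orbits_inputOutput_mul_card [Fintype G] [Finite X]
    [∀ g : G, Decidable (∀ x : X, Even (period g x))] :
    Nat.card (orbitRel.Quotient (Gᵈᵐᵃ × Perm Bool) (X → Bool)) * (Fintype.card G * 2) =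
      ∑ g : G, 2 ^ Nat.card (orbitRel.Quotient (Subgroup.zpowers g) X) *
        if ∀ x : X, Even (period g x) then 2 else 1 := by
  let : Fintype Gᵈᵐᵃ := Fintype.ofEquiv G DomMulAct.mk
  let : Fintype (orbitRel.Quotient (Gᵈᵐᵃ × Perm Bool) (X → Bool)) := Fintype.ofFinite _
  let (u : Gᵈᵐᵃ × Perm Bool) : Fintype (fixedBy (X → Bool) u) := Fintype.ofFinite _
  have burnside := sum_card_fixedBy_eq_card_orbits_mul_card_group (Gᵈᵐᵃ × Perm Bool) (X → Bool)
  simp only [← Nat.card_eq_fintype_card, Fintype.sum_prod_type, ← DomMulAct.mk.sum_comp,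
    sum_card_fixedBy_perm_bool] at burnside
  rw [burnside, Nat.card_prod, Nat.card_congr DomMulAct.mk.symm, ← Nat.card_eq_fintype_card]
  congr 2
  simp [Nat.card_eq_fintype_card, Fintype.card_perm]

end Burnside

section CycleMinima

variable {G X : Type*} [Group G] [MulAction G X]

theorem card_orbits_eq_card_minima {α : Type*} [LinearOrder α] [WellFoundedLT α] {key : X → α}
    (hkey : Function.Injective key) :
    Nat.card (orbitRel.Quotient G X) = Nat.card {x // ∀ g : G, key x ≤ key (g • x)} := by
  refine (Nat.card_eq_of_bijective (fun x => Quotient.mk (orbitRel G X) x.1) ⟨?_, ?_⟩).symm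
  · rintro ⟨_, hgx⟩ ⟨x, hx⟩ h
    obtain ⟨g, rfl⟩ := Quotient.exact h
    exact Subtype.ext <| hkey <| ((hgx g⁻¹).trans_eq (by simp)).antisymm (hx g)
  · refine Quotient.ind fun x => ?_
    obtain ⟨g, -, hg⟩ := exists_minimalFor_of_wellFoundedLT (fun _ : G => True)
      (fun g => key (g • x)) ⟨1, trivial⟩
    refine ⟨⟨g • x, fun h => ?_⟩, Quotient.sound ⟨g, rfl⟩⟩
    rw [smul_smul]
    exact le_of_not_gt fun hlt => hlt.not_ge (hg trivial hlt.le)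

theorem forall_zpowers_iff_forall_pow_lt [Finite G] {g : G} {N : ℕ} (hN : orderOf g ≤ N)
    {P : G → Prop} : (∀ h : Subgroup.zpowers g, P h) ↔ ∀ k < N, P (g ^ k) := by
  classical
  refine ⟨fun h k _ => h ⟨g ^ k, Subgroup.npow_mem_zpowers g k⟩, fun h => ?_⟩
  rintro ⟨y, hy⟩
  obtain ⟨k, hk, rfl⟩ := mem_image.1 (mem_zpowers_iff_mem_range_orderOf.1 hy)
  exact h k ((mem_range.1 hk).trans_le hN)

theorem forall_even_period_iff {M : Type*} [Monoid M] [MulAction M X] {g : M} {r q : ℕ}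
    (hq : Odd q) (hg : g ^ (2 ^ r * q) = 1) :
    (∀ x : X, Even (period g x)) ↔ ∀ x : X, g ^ q • x ≠ x := by
  refine forall_congr' fun x => ⟨fun h hx => ?_, fun h => ?_⟩
  · exact Nat.not_even_iff_odd.2 hq (h.trans_dvd (pow_smul_eq_iff_period_dvd.1 hx))
  · by_contra hodd
    have hdvd : period g x ∣ 2 ^ r * q := pow_smul_eq_iff_period_dvd.1 (by rw [hg, one_smul])
    have hcop : (period g x).Coprime (2 ^ r) :=
      (Nat.coprime_two_right.2 (Nat.not_even_iff_odd.1 hodd)).pow_right r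
    exact h (pow_smul_eq_iff_period_dvd.2 (hcop.dvd_of_dvd_mul_left hdvd))

variable [Fintype X] {g : G} {key : X ↪ ℕ} {t : ℕ → ℕ}

theorem card_orbits_zpowers_eq_card_filter [Finite G] {N : ℕ} (hN : orderOf g ≤ N)
    (ht : Function.Semiconj key (g • ·) t) :
    Nat.card (orbitRel.Quotient (Subgroup.zpowers g) X) =
      #{m ∈ univ.map key | ∀ y ∈ List.iterate t m N, m ≤ y} := by
  rw [card_orbits_eq_card_minima key.injective, filter_map, card_map,
    Nat.subtype_card _ fun x => ?_]
  simp only [mem_filter, mem_univ, true_and, Function.comp_apply, List.mem_iterate,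
    forall_exists_index, and_imp]
  refine Iff.symm <|
    (forall_zpowers_iff_forall_pow_lt (P := fun h => key x ≤ key (h • x)) hN).trans ?_
  have key_pow_smul (k : ℕ) : key (g ^ k • x) = t^[k] (key x) := by
    rw [← smul_iterate_apply, ht.iterate_right k]
  simp only [key_pow_smul]
  exact ⟨fun h y k hk hy => hy ▸ h k hk, fun h k hk => h _ k hk rfl⟩

theorem forall_even_period_iff_iterate_ne {M : Type*} [Monoid M] [MulAction M X] {g : M} {r q : ℕ}
    (hq : Odd q) (hg : g ^ (2 ^ r * q) = 1) (ht : Function.Semiconj key (g • ·) t) :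
    (∀ x : X, Even (period g x)) ↔ ∀ m ∈ univ.map key, t^[q] m ≠ m := by
  simp only [forall_even_period_iff hq hg, mem_map, mem_univ, true_and, forall_exists_index,
    forall_apply_eq_imp_iff, ← (ht.iterate_right q).eq, smul_iterate_apply, key.injective.ne_iff]

/-- The number of Boolean functions fixed by `(g, p)`, summed over `p : Perm Bool`, in terms of the
permutation `t` that `g` induces on the set `S` of codes of the points, when `g` has order at
most `N` and `q` is the odd part of an exponent of `g`. -/
def cycleWeight (S : Finset ℕ) (N q : ℕ) (t : ℕ → ℕ) : ℕ :=
  2 ^ #{m ∈ S | ∀ y ∈ List.iterate t m N, m ≤ y} * if ∀ m ∈ S, t^[q] m ≠ m then 2 else 1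

theorem two_pow_card_orbits_mul_eq_cycleWeight [Finite G]
    [Decidable (∀ x : X, Even (period g x))] {N r q : ℕ} (hN : orderOf g ≤ N) (hq : Odd q)
    (hg : g ^ (2 ^ r * q) = 1) (ht : Function.Semiconj key (g • ·) t) :
    (2 ^ Nat.card (orbitRel.Quotient (Subgroup.zpowers g) X) *
      if ∀ x : X, Even (period g x) then 2 else 1) = cycleWeight (univ.map key) N q t := by
  rw [cycleWeight, card_orbits_zpowers_eq_card_filter hN ht]
  simp only [forall_even_period_iff_iterate_ne hq hg ht]

end CycleMinima

section SignedPerm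

/-- The product action of the wreath product of `M` by `H`: the top group permutes the coordinates,
then the `i`-th factor of the base group acts on the `i`-th coordinate. -/
instance wreathMulAction {M H ι β : Type*} [Group M] [MulAction M β] [Group H] [MulAction H ι] :
    MulAction ((ι → M) ⋊[mulAutArrow] H) (ι → β) where
  smul g x i := g.left i • x (g.right⁻¹ • i)
  one_smul x := funext fun i => by
    change (1 : M) • x ((1 : H)⁻¹ • i) = x i
    simp
  mul_smul g h x := funext fun i => by
    change (g.left i * h.left (g.right⁻¹ • i)) • x ((g.right * h.right)⁻¹ • i) =
      g.left i • h.left (g.right⁻¹ • i) • x (h.right⁻¹ • g.right⁻¹ • i)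
    simp [mul_smul]

theorem wreath_pow_mul_eq_one {M H ι : Type*} [Group M] [Group H] [MulAction H ι]
    {g : (ι → M) ⋊[mulAutArrow] H} {m n : ℕ} (hg : g.right ^ m = 1) (hM : ∀ a : M, a ^ n = 1) :
    g ^ (m * n) = 1 := by
  obtain ⟨a, ha⟩ : g ^ m ∈ (SemidirectProduct.inl (φ := mulAutArrow)).range := by
    rw [SemidirectProduct.range_inl_eq_ker_rightHom, MonoidHom.mem_ker, map_pow]
    exact hg
  have ha_pow : a ^ n = 1 := funext fun i => hM (a i)
  rw [pow_mul, ← ha, ← map_pow, ha_pow, map_one]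

/-- The wreath product of `Perm Bool` by `Perm ι`: the automorphism group of the cube `ι → Bool`. -/
abbrev SignedPerm (ι : Type*) : Type _ := (ι → Perm Bool) ⋊[mulAutArrow] Perm ι

/-- A bit `b` stands for the permutation `y ↦ xor y b` of `Bool`. -/
def xorPermEquiv : Bool ≃ Perm Bool where
  toFun b := Function.Involutive.toPerm (xor · b) fun y => by simp
  invFun p := p false
  left_inv b := Bool.false_xor b
  right_inv := by decide

/-- A permutation `σ` and a mask `a` stand for the signed permutation that substitutes the literal
`xor (x (σ i)) (a i)` for the `i`-th input. -/
def substEquiv (ι : Type*) : Perm ι × (ι → Bool) ≃ SignedPerm ι where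
  toFun u := ⟨fun i => xorPermEquiv (u.2 i), u.1⁻¹⟩
  invFun g := (g.right⁻¹, fun i => xorPermEquiv.symm (g.left i))
  left_inv u := by simp
  right_inv g := by simp

instance {ι : Type*} [Fintype ι] [DecidableEq ι] : Fintype (SignedPerm ι) :=
  Fintype.ofEquiv _ (substEquiv ι)

theorem substEquiv_smul {ι : Type*} (σ : Perm ι) (a x : ι → Bool) :
    substEquiv ι (σ, a) • x = fun i => xor (x (σ i)) (a i) := rfl

theorem card_signedPerm (n : ℕ) :
    Fintype.card (SignedPerm (Fin n)) = n.factorial * 2 ^ n := by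
  simp [← Fintype.card_congr (substEquiv (Fin n)), Fintype.card_perm]

theorem perm_fin_four_pow_eq_one (σ : Perm (Fin 4)) : σ ^ 3 = 1 ∨ σ ^ 4 = 1 := by
  revert σ; decide +kernel

theorem orderOf_signedPerm_fin_four_dvd (g : SignedPerm (Fin 4)) :
    orderOf g ∣ 3 * 2 ∨ orderOf g ∣ 4 * 2 := by
  have perm_bool_sq : ∀ p : Perm Bool, p ^ 2 = 1 := by decide
  simp only [orderOf_dvd_iff_pow_eq_one]
  exact (perm_fin_four_pow_eq_one g.right).imp (wreath_pow_mul_eq_one · perm_bool_sq)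
    (wreath_pow_mul_eq_one · perm_bool_sq)

theorem orderOf_signedPerm_fin_four_le (g : SignedPerm (Fin 4)) : orderOf g ≤ 8 :=
  (orderOf_signedPerm_fin_four_dvd g).elim
    (fun h => (Nat.le_of_dvd (by decide) h).trans (by decide)) (Nat.le_of_dvd (by decide))

theorem signedPerm_fin_four_pow_eq_one (g : SignedPerm (Fin 4)) : g ^ (2 ^ 3 * 3) = 1 :=
  orderOf_dvd_iff_pow_eq_one.1 <| (orderOf_signedPerm_fin_four_dvd g).elim
    (·.trans (by decide)) (·.trans (by decide))

end SignedPerm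

section BinaryCodes

variable {n : ℕ}

theorem ofBits_injective : Function.Injective (Nat.ofBits (n := n)) := fun x y h => by
  ext i
  simpa using congrArg (Nat.testBit · i) h

theorem univ_map_ofBits :
    univ.map ⟨Nat.ofBits (n := n), ofBits_injective⟩ = range (2 ^ n) :=
  eq_of_subset_of_card_le (fun m hm => by
    obtain ⟨x, -, rfl⟩ := mem_map.1 hm
    exact mem_range.2 (Nat.ofBits_lt_two_pow x)) (by simp)

/-- The action of `substEquiv (Fin n) (σ, a)` on binary numerals, with `a` as a numeral too. -/
def bitStep (σ : Perm (Fin n)) (a m : ℕ) : ℕ :=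
  Nat.ofBits (fun i => m.testBit (σ i)) ^^^ a

theorem semiconj_ofBits_bitStep (σ : Perm (Fin n)) (a : Fin n → Bool) :
    Function.Semiconj (Nat.ofBits (n := n)) (substEquiv (Fin n) (σ, a) • ·)
      (bitStep σ (Nat.ofBits a)) := fun x => by
  refine Nat.eq_of_testBit_eq fun i => ?_
  rcases lt_or_ge i n with hi | hi <;> simp [bitStep, substEquiv_smul, hi]

end BinaryCodes

section Npn

/-- The function `f`, arranged so that kernel reduction evaluates its argument to a numeral first:
equal arguments then become syntactically equal and reuse the cached value of `f`. -/
def forceArg {α : Type*} (f : ℕ → α) (m : ℕ) : α :=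
  Nat.rec (f 0) (fun k _ => f (k + 1)) m

theorem forceArg_eq {α : Type*} (f : ℕ → α) : forceArg f = f :=
  funext fun m => by cases m <;> rfl

set_option maxRecDepth 10000 in
theorem sum_cycleWeight_bitStep :
    ∑ σ : Perm (Fin 4), ∑ a ∈ range (2 ^ 4), cycleWeight (range (2 ^ 4)) 8 3 (bitStep σ a) =
      222 * (384 * 2) := by
  have forced : ∑ σ : Perm (Fin 4), ∑ a ∈ range (2 ^ 4),
      cycleWeight (range (2 ^ 4)) 8 3 (forceArg (bitStep σ a)) = 222 * (384 * 2) := by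
    decide +kernel
  simpa only [forceArg_eq] using forced

theorem card_orbits_boolean_four :
    Nat.card (orbitRel.Quotient ((SignedPerm (Fin 4))ᵈᵐᵃ × Perm Bool) ((Fin 4 → Bool) → Bool)) =
      222 := by
  have weight_eq (σ : Perm (Fin 4)) (a : Fin 4 → Bool) :=
    two_pow_card_orbits_mul_eq_cycleWeight (key := ⟨_, ofBits_injective⟩)
      (orderOf_signedPerm_fin_four_le _) (by decide : Odd 3) (signedPerm_fin_four_pow_eq_one _)
      (semiconj_ofBits_bitStep σ a)
  have card_group : Fintype.card (SignedPerm (Fin 4)) = 384 := card_signedPerm 4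
  refine Nat.eq_of_mul_eq_mul_right (by decide : 0 < 384 * 2) ?_
  calc
    _ = ∑ σ : Perm (Fin 4), ∑ a : Fin 4 → Bool,
          cycleWeight (range (2 ^ 4)) 8 3 (bitStep σ (Nat.ofBits a)) := by
      rw [← card_group, card_orbits_inputOutput_mul_card, ← (substEquiv (Fin 4)).sum_comp,
        Fintype.sum_prod_type]
      simp only [weight_eq, univ_map_ofBits]
    _ = ∑ σ : Perm (Fin 4), ∑ a ∈ range (2 ^ 4),
          cycleWeight (range (2 ^ 4)) 8 3 (bitStep σ a) := by
      simp only [← univ_map_ofBits (n := 4), sum_map, Function.Embedding.coeFn_mk]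
    _ = 222 * (384 * 2) := sum_cycleWeight_bitStep

theorem npnEquiv4_iff_mem_orbit {f g : (Fin 4 → Bool) → Bool} :
    NPNEquiv4 f g ↔ g ∈ orbit ((SignedPerm (Fin 4))ᵈᵐᵃ × Perm Bool) f := by
  let e := ((substEquiv (Fin 4)).trans DomMulAct.mk).prodCongr xorPermEquiv
  rw [mem_orbit_iff, e.surjective.exists]
  simp only [Prod.exists, @eq_comm _ _ g, funext_iff]
  rfl

end Npn

/-- **222 NPN classes of 4-variable Boolean functions.** NPN equivalence is an equivalence
relation on the 65536 Boolean functions of 4 variables, and there are exactly 222 equivalence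
classes. -/
theorem npn4_equivalence_and_card_classes :
    Equivalence NPNEquiv4 ∧
    Set.ncard {C : Set ((Fin 4 → Bool) → Bool) |
      ∃ f : (Fin 4 → Bool) → Bool, C = {g | NPNEquiv4 f g}} = 222 := by
  let orbits := orbitRel ((SignedPerm (Fin 4))ᵈᵐᵃ × Perm Bool) ((Fin 4 → Bool) → Bool)
  have npn_eq : NPNEquiv4 = fun f g => orbits g f :=
    funext₂ fun f g => propext npnEquiv4_iff_mem_orbit
  rw [npn_eq]
  refine ⟨⟨orbits.refl, orbits.symm, fun hfg hgh => orbits.trans hgh hfg⟩, ?_⟩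
  change Set.ncard orbits.classes = 222
  rw [← Nat.card_coe_set_eq, ← Nat.card_congr orbits.quotientEquivClasses]
  exact card_orbits_boolean_four
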